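/- arXiv:2312.12177 — 2 statements merged into one kernel-verified Lean document; each statement's English description precedes it below -/
import Mathlib

section
/- Let a > b > 0 and let C be a Hermitian positive definite complex n×n matrix. The spectrum of a complex n×n matrix A belongs to the open elliptic region E_i = {λ ∈ ℂ : (Re λ)²/a² + (Im λ)²/b² < 1} if and only if there exists a Hermitian positive definite complex n×n matrix H satisfying H − (1/(2a²) + 1/(2b²))·A*HA − (1/(4a²) − 1/(4b²))·(HA² + (A*)²H) = C. -/
open Matrix
open scoped ComplexOrder

/-!
Put `φ(α, β) = 1 - p ᾱβ - (q β² + q̄ ᾱ²)`. If `v` is an eigenvector of `A` for `μ`, then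
`v*(𝓛 H)v = φ(μ, μ) v*Hv`, where `𝓛 H = H - p A*HA - (q HA² + q̄ (A*)²H)`, so a positive definite
solution of `𝓛 H = C` forces `φ(μ, μ) > 0`; for suitable `p`, `q` this is the equation of the
ellipse.

Conversely, the eigenvalues of `𝓛` are values `φ(α, β)` with `α`, `β` in the spectrum of `A`, and
`2 Re φ(α, β) = φ(α, α) + φ(β, β) + p |α - β|²`, so `𝓛` has no eigenvalue in `(-∞, 0]` and every
`(1 - t) + t 𝓛` with `0 ≤ t ≤ 1` is invertible. The solutions of `(1 - t) H + t 𝓛 H = C` therefore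
form a path starting at `C`. A positive semidefinite `H` on it cannot be singular: if `H v = 0`,
then `v*(𝓛 H)v = -p (Av)*H(Av) ≤ 0`, which contradicts `v*Cv > 0`. So the path never leaves the
cone of positive definite matrices.
-/

section Homotopy

section OrderedField

variable {K E : Type*} [Field K] [LinearOrder K] [IsStrictOrderedRing K] [AddCommGroup E]
  [Module K E] [FiniteDimensional K E]

theorem isUnit_homotopy {L : Module.End K E} (hL : ∀ r ≤ 0, ¬ L.HasEigenvalue r) {t : K}
    (ht : t ∈ Set.Icc 0 1) : IsUnit ((1 - t) • (1 : Module.End K E) + t • L) := by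
  rw [LinearMap.isUnit_iff_ker_eq_bot, LinearMap.ker_eq_bot']
  intro x hx
  by_contra hx0
  replace hx : (1 - t) • x + t • L x = 0 := hx
  rcases ht.1.eq_or_lt with rfl | ht0
  · simp [hx0] at hx
  have hLx : L x = (-((1 - t) / t)) • x := by
    rw [neg_smul, eq_neg_iff_add_eq_zero, add_comm]
    simpa [smul_smul, div_eq_inv_mul, ht0.ne'] using congrArg (t⁻¹ • ·) hx
  exact hL _ (neg_nonpos.2 (div_nonneg (sub_nonneg.2 ht.2) ht0.le))
    (Module.End.hasEigenvalue_of_hasEigenvector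
      ⟨Module.End.mem_eigenspace_iff.2 hLx, hx0⟩)

theorem isSelfAdjoint_of_homotopy [StarRing K] [TrivialStar K] [StarAddMonoid E] [StarModule K E]
    {L : Module.End K E} (hstar : ∀ x, L (star x) = star (L x))
    (hL : ∀ r ≤ 0, ¬ L.HasEigenvalue r) {t : K} (ht : t ∈ Set.Icc 0 1) {x : E}
    (hx : IsSelfAdjoint ((1 - t) • x + t • L x)) : IsSelfAdjoint x := by
  refine ((Module.End.isUnit_iff _).1 (isUnit_homotopy hL ht)).injective ?_
  change (1 - t) • star x + t • L (star x) = (1 - t) • x + t • L x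
  simpa only [hstar, star_add, star_smul, star_trivial] using hx.star_eq

end OrderedField

variable {E : Type*} [NormedAddCommGroup E] [NormedSpace ℝ E] [FiniteDimensional ℝ E]

theorem isPreconnected_homotopy_solutions {L : Module.End ℝ E}
    (hL : ∀ r ≤ 0, ¬ L.HasEigenvalue r) (c : E) :
    IsPreconnected {x | ∃ t ∈ Set.Icc (0 : ℝ) 1, (1 - t) • x + t • L x = c} := by
  let toCLM := Module.End.toContinuousLinearMap (𝕜 := ℝ) E
  let F : ℝ → E →L[ℝ] E := fun t => (1 - t) • 1 + t • toCLM L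
  have hF_unit : ∀ t ∈ Set.Icc (0 : ℝ) 1, IsUnit (F t) := fun t ht => by
    simpa [F] using (isUnit_homotopy hL ht).map toCLM
  have hF_inv : ContinuousOn (fun t => Ring.inverse (F t) c) (Set.Icc 0 1) := fun t ht => by
    obtain ⟨u, hu⟩ := hF_unit t ht
    have hF : Continuous F := by fun_prop
    have hinv : ContinuousAt Ring.inverse (F t) := hu ▸ NormedRing.inverse_continuousAt u
    exact ((hinv.comp hF.continuousAt).clm_apply continuousAt_const).continuousWithinAt
  convert isPreconnected_Icc.image _ hF_inv using 1
  ext x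
  refine exists_congr fun t => and_congr_right fun ht => ?_
  change F t x = c ↔ Ring.inverse (F t) c = x
  constructor
  · rintro rfl
    rw [← mul_apply_eq_comp, Ring.inverse_mul_cancel _ (hF_unit t ht), one_apply_eq_self]
  · rintro rfl
    rw [← mul_apply_eq_comp, Ring.mul_inverse_cancel _ (hF_unit t ht), one_apply_eq_self]

end Homotopy

section PosDef

variable {ι 𝕜 : Type*} [RCLike 𝕜]

theorem isOpen_setOf_forall_re_dotProduct_mulVec_pos [Fintype ι] :
    IsOpen {X : Matrix ι ι 𝕜 | ∀ v ≠ 0, 0 < RCLike.re (star v ⬝ᵥ (X *ᵥ v))} := by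
  have hsphere : {X : Matrix ι ι 𝕜 | ∀ v ≠ 0, 0 < RCLike.re (star v ⬝ᵥ (X *ᵥ v))} =
      {X | ∀ v ∈ Metric.sphere (0 : ι → 𝕜) 1, 0 < RCLike.re (star v ⬝ᵥ (X *ᵥ v))} := by
    ext X
    refine ⟨fun hX v hv => hX v (ne_zero_of_mem_unit_sphere ⟨v, hv⟩), fun hX v hv => ?_⟩
    have hunit := hX ((‖v‖⁻¹ : ℝ) • v) (by simp [norm_smul, hv])
    have hnorm : 0 < ‖v‖⁻¹ := inv_pos.2 (norm_pos_iff.2 hv)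
    rw [star_smul, mulVec_smul, smul_dotProduct, dotProduct_smul, star_trivial, RCLike.smul_re,
      RCLike.smul_re] at hunit
    exact (mul_pos_iff_of_pos_left hnorm).1 ((mul_pos_iff_of_pos_left hnorm).1 hunit)
  rw [hsphere, isOpen_iff_eventually]
  refine fun X hX => (isCompact_sphere 0 1).eventually_forall_of_forall_eventually fun v hv => ?_
  have hcont : Continuous fun Y : Matrix ι ι 𝕜 × (ι → 𝕜) =>
      RCLike.re (star Y.2 ⬝ᵥ (Y.1 *ᵥ Y.2)) := by fun_prop
  exact hcont.continuousAt.eventually (lt_mem_nhds (hX v hv))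

theorem posDef_of_re_dotProduct_mulVec_pos [Fintype ι] {X : Matrix ι ι 𝕜}
    (hX : X.IsHermitian) (hpos : ∀ v ≠ 0, 0 < RCLike.re (star v ⬝ᵥ (X *ᵥ v))) : X.PosDef :=
  .of_dotProduct_mulVec_pos hX fun v hv =>
    RCLike.pos_iff.2 ⟨hpos v hv, hX.im_star_dotProduct_mulVec_self v⟩

theorem posSemidef_of_re_dotProduct_mulVec_nonneg [Fintype ι] {X : Matrix ι ι 𝕜}
    (hX : X.IsHermitian) (hnonneg : ∀ v, 0 ≤ RCLike.re (star v ⬝ᵥ (X *ᵥ v))) : X.PosSemidef :=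
  .of_dotProduct_mulVec_nonneg hX fun v =>
    RCLike.nonneg_iff.2 ⟨hnonneg v, hX.im_star_dotProduct_mulVec_self v⟩

theorem posDef_of_mem_isPreconnected [Finite ι] {S : Set (Matrix ι ι 𝕜)}
    (hS : IsPreconnected S) (hherm : ∀ X ∈ S, X.IsHermitian)
    (hsing : ∀ X ∈ S, X.PosSemidef → X.PosDef) {C : Matrix ι ι 𝕜} (hCS : C ∈ S)
    (hC : C.PosDef) {X : Matrix ι ι 𝕜} (hX : X ∈ S) : X.PosDef := by
  have := Fintype.ofFinite ι
  let U : Set (Matrix ι ι 𝕜) := {X | ∀ v ≠ 0, 0 < RCLike.re (star v ⬝ᵥ (X *ᵥ v))}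
  let K : Set (Matrix ι ι 𝕜) := {X | ∀ v, 0 ≤ RCLike.re (star v ⬝ᵥ (X *ᵥ v))}
  have hUK : closure U ⊆ K := by
    refine closure_minimal (fun X hX v => ?_) ?_
    · rcases eq_or_ne v 0 with rfl | hv
      · simp
      · exact (hX v hv).le
    · simp only [K, Set.ofPred_forall]
      exact isClosed_iInter fun v => isClosed_le continuous_const (by fun_prop)
  have hSU : S ⊆ U := hS.subset_of_closure_inter_subset
    isOpen_setOf_forall_re_dotProduct_mulVec_pos ⟨C, hCS, fun v hv => hC.re_dotProduct_pos hv⟩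
    fun Y hY v hv => (hsing Y hY.2
      (posSemidef_of_re_dotProduct_mulVec_nonneg (hherm Y hY.2) (hUK hY.1))).re_dotProduct_pos hv
  exact posDef_of_re_dotProduct_mulVec_pos (hherm X hX) (hSU hX)

end PosDef

section ZTransformation

variable {ι 𝕜 : Type*} [Fintype ι] [RCLike 𝕜]

/-- Z-transformations of the cone of positive semidefinite matrices, the analogue for linear maps
of real square matrices with nonpositive off-diagonal entries. The condition that
`tr (X Y) = 0` implies `tr (L X Y) ≤ 0` is imposed on the rank one matrices `Y = v v*`, for which
`tr (X Y) = 0` means `X v = 0`. -/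
def IsZTransformation (L : Module.End ℝ (Matrix ι ι 𝕜)) : Prop :=
  ∀ ⦃X : Matrix ι ι 𝕜⦄, X.PosSemidef → ∀ v, X *ᵥ v = 0 → star v ⬝ᵥ (L X *ᵥ v) ≤ 0

theorem IsZTransformation.posDef_of_homotopy {L : Module.End ℝ (Matrix ι ι 𝕜)}
    (hL : IsZTransformation L) {t : ℝ} (ht : 0 ≤ t) {X : Matrix ι ι 𝕜} (hX : X.PosSemidef)
    (hC : ((1 - t) • X + t • L X).PosDef) : X.PosDef := by
  refine .of_dotProduct_mulVec_pos hX.isHermitian fun v hv =>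
    (hX.dotProduct_mulVec_nonneg v).lt_of_ne' fun hv0 => ?_
  have hker : X *ᵥ v = 0 := (hX.dotProduct_mulVec_zero_iff v).1 hv0
  have hpos := hC.dotProduct_mulVec_pos hv
  rw [add_mulVec, smul_mulVec, smul_mulVec, hker, smul_zero, zero_add, dotProduct_smul] at hpos
  exact hpos.not_ge (smul_nonpos_of_nonneg_of_nonpos ht (hL hX v hker))

open scoped Matrix.Norms.Frobenius in
theorem IsZTransformation.exists_posDef_apply_eq {L : Module.End ℝ (Matrix ι ι 𝕜)}
    (hL : IsZTransformation L) (hstar : ∀ X, L Xᴴ = (L X)ᴴ)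
    (hev : ∀ r ≤ 0, ¬ L.HasEigenvalue r) {C : Matrix ι ι 𝕜} (hC : C.PosDef) :
    ∃ H : Matrix ι ι 𝕜, H.PosDef ∧ L H = C := by
  have hL_unit : IsUnit L := by
    simpa using isUnit_homotopy hev (Set.right_mem_Icc.2 zero_le_one)
  obtain ⟨H, hH⟩ := ((Module.End.isUnit_iff L).1 hL_unit).surjective C
  refine ⟨H, ?_, hH⟩
  refine posDef_of_mem_isPreconnected (isPreconnected_homotopy_solutions hev C) ?_ ?_
    ⟨0, by simp⟩ hC ⟨1, by simpa using hH⟩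
  · rintro X ⟨t, ht, hX⟩
    exact isSelfAdjoint_of_homotopy hstar hev ht (hX ▸ hC.isHermitian)
  · rintro X ⟨t, ht, hX⟩ hXpos
    exact hL.posDef_of_homotopy ht.1 hXpos (hX ▸ hC)

end ZTransformation

section CommonEigenvector

variable {K V : Type*} [Field K] [IsAlgClosed K] [AddCommGroup V] [Module K V]

theorem exists_inf_eigenspace_ne_bot {W : Submodule K V} [FiniteDimensional K W] (hW : W ≠ ⊥)
    {f : Module.End K V} (hf : Set.MapsTo f W W) : ∃ a, W ⊓ f.eigenspace a ≠ ⊥ := by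
  have : Nontrivial W := Submodule.nontrivial_iff_ne_bot.2 hW
  obtain ⟨a, ha⟩ := Module.End.exists_eigenvalue (f.restrict hf)
  obtain ⟨x, hx, hx0⟩ := ha.exists_hasEigenvector
  refine ⟨a, (Submodule.ne_bot_iff _).2 ⟨x, ⟨x.2, ?_⟩, by simpa using hx0⟩⟩
  exact Module.End.mem_eigenspace_iff.2
    (congrArg Subtype.val (Module.End.mem_eigenspace_iff.1 hx))

theorem exists_common_eigenvector {W : Submodule K V} [FiniteDimensional K W] (hW : W ≠ ⊥)
    {f g : Module.End K V} (hfg : Commute f g) (hf : Set.MapsTo f W W) (hg : Set.MapsTo g W W) :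
    ∃ x ∈ W, x ≠ 0 ∧ ∃ a b : K, f x = a • x ∧ g x = b • x := by
  obtain ⟨a, ha⟩ := exists_inf_eigenspace_ne_bot hW hf
  have hg_inf : Set.MapsTo g ↑(W ⊓ f.eigenspace a) ↑(W ⊓ f.eigenspace a) :=
    hg.inter_inter (Module.End.mapsTo_genEigenspace_of_comm hfg a 1)
  have : FiniteDimensional K ↥(W ⊓ f.eigenspace a) := .of_injective
    (Submodule.inclusion inf_le_left) (Submodule.inclusion_injective inf_le_left)
  obtain ⟨b, hb⟩ := exists_inf_eigenspace_ne_bot ha hg_inf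
  obtain ⟨x, ⟨⟨hxW, hxa⟩, hxb⟩, hx0⟩ := (Submodule.ne_bot_iff _).1 hb
  exact ⟨x, hxW, hx0, a, b, Module.End.mem_eigenspace_iff.1 hxa,
    Module.End.mem_eigenspace_iff.1 hxb⟩

end CommonEigenvector

theorem mem_spectrum_of_mul_eq_smul {R B : Type*} [CommRing R] [Ring B] [Algebra R B] {x y : B}
    {r : R} (hx : x ≠ 0) (h : x * y = r • x) : r ∈ spectrum R y := fun hu =>
  hx <| hu.mul_left_eq_zero.1 <| by
    rw [mul_sub, h, ← Algebra.commutes, Algebra.smul_def, sub_self]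

section ConicLyapunov

open scoped ComplexConjugate

variable {ι : Type*} [Fintype ι] [DecidableEq ι]

/-- The map `X ↦ X - p A*XA - (q XA² + q̄ (A*)²X)`, written in terms of left multiplication by `A*`
and right multiplication by `A`. It is the left-hand side of the Lyapunov-type equation for the
region `p |μ|² + 2 Re (q μ²) < 1`, which is bounded by a conic. -/
noncomputable def conicLyapunov (p : ℝ) (q : ℂ) (A : Matrix ι ι ℂ) :
    Module.End ℂ (Matrix ι ι ℂ) :=
  1 - (p : ℂ) • (LinearMap.mulLeft ℂ Aᴴ * LinearMap.mulRight ℂ A) -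
    (q • LinearMap.mulRight ℂ A ^ 2 + conj q • LinearMap.mulLeft ℂ Aᴴ ^ 2)

/-- The symbol `φ(α, β)` of `conicLyapunov`: what the map becomes when `A*` on the left is replaced
by `ᾱ` and `A` on the right by `β`. -/
noncomputable def conicSymbol (p : ℝ) (q α β : ℂ) : ℂ :=
  1 - p * (conj α * β) - (q * β ^ 2 + conj q * conj α ^ 2)

theorem conicSymbol_self_pos_iff (p : ℝ) (q μ : ℂ) :
    0 < conicSymbol p q μ μ ↔ p * ‖μ‖ ^ 2 + 2 * (q * μ ^ 2).re < 1 := by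
  have hconj : q * μ ^ 2 + conj q * conj μ ^ 2 = ((2 * (q * μ ^ 2).re : ℝ) : ℂ) := by
    rw [← map_pow, ← map_mul, Complex.add_conj]
  have hreal : conicSymbol p q μ μ =
      ((1 - (p * ‖μ‖ ^ 2 + 2 * (q * μ ^ 2).re) : ℝ) : ℂ) := by
    rw [conicSymbol, hconj, Complex.conj_mul']
    push_cast
    ring
  rw [hreal, Complex.zero_lt_real, sub_pos]

theorem two_mul_re_conicSymbol (p : ℝ) (q α β : ℂ) :
    2 * (conicSymbol p q α β).re =
      (conicSymbol p q α α).re + (conicSymbol p q β β).re + p * ‖α - β‖ ^ 2 := by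
  rw [← Complex.normSq_eq_norm_sq, Complex.normSq_apply]
  simp [conicSymbol, pow_two]
  ring

theorem conicLyapunov_apply (p : ℝ) (q : ℂ) (A X : Matrix ι ι ℂ) :
    conicLyapunov p q A X =
      X - (p : ℂ) • (Aᴴ * X * A) - (q • (X * A ^ 2) + conj q • (Aᴴ ^ 2 * X)) := by
  simp [conicLyapunov, LinearMap.pow_mulLeft, LinearMap.pow_mulRight, mul_assoc]

theorem conicLyapunov_conjTranspose (p : ℝ) (q : ℂ) (A X : Matrix ι ι ℂ) :
    conicLyapunov p q A Xᴴ = (conicLyapunov p q A X)ᴴ := by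
  simp [conicLyapunov_apply, mul_assoc, add_comm]

theorem dotProduct_conicLyapunov_mulVec (p : ℝ) (q : ℂ) {α β : ℂ} {A : Matrix ι ι ℂ}
    {u v : ι → ℂ} (hu : A *ᵥ u = α • u) (hv : A *ᵥ v = β • v) (X : Matrix ι ι ℂ) :
    star u ⬝ᵥ (conicLyapunov p q A X *ᵥ v) = conicSymbol p q α β * (star u ⬝ᵥ (X *ᵥ v)) := by
  have hu' (w : ι → ℂ) : star u ⬝ᵥ (Aᴴ *ᵥ w) = conj α * (star u ⬝ᵥ w) := by
    rw [dotProduct_mulVec, ← star_mulVec, hu, star_smul, smul_dotProduct, smul_eq_mul,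
      Complex.star_def]
  simp only [conicLyapunov_apply, conicSymbol, pow_two, sub_mulVec, add_mulVec, smul_mulVec,
    ← mulVec_mulVec, hv, mulVec_smul, dotProduct_sub, dotProduct_add, dotProduct_smul, hu',
    smul_eq_mul]
  ring

theorem conicLyapunov_apply_of_mul_eq_smul (p : ℝ) (q : ℂ) {α β : ℂ} {A X : Matrix ι ι ℂ}
    (hα : Aᴴ * X = conj α • X) (hβ : X * A = β • X) :
    conicLyapunov p q A X = conicSymbol p q α β • X := by
  simp only [conicLyapunov_apply, conicSymbol, pow_two, ← mul_assoc X, mul_assoc Aᴴ, hα, hβ,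
    smul_mul_assoc, mul_smul_comm]
  module

theorem commute_conicLyapunov (p : ℝ) (q : ℂ) {A : Matrix ι ι ℂ}
    {S : Module.End ℂ (Matrix ι ι ℂ)} (hleft : Commute (LinearMap.mulLeft ℂ Aᴴ) S)
    (hright : Commute (LinearMap.mulRight ℂ A) S) : Commute (conicLyapunov p q A) S :=
  ((Commute.one_left S).sub_left ((hleft.mul_left hright).smul_left _)).sub_left
    (((hright.pow_left 2).smul_left q).add_left ((hleft.pow_left 2).smul_left _))

theorem exists_conicSymbol_eq_of_hasEigenvalue {p : ℝ} {q r : ℂ} {A : Matrix ι ι ℂ}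
    (hr : (conicLyapunov p q A).HasEigenvalue r) :
    ∃ α ∈ spectrum ℂ A, ∃ β ∈ spectrum ℂ A, r = conicSymbol p q α β := by
  have hcomm : Commute (LinearMap.mulLeft ℂ Aᴴ) (LinearMap.mulRight ℂ A) :=
    LinearMap.commute_mulLeft_right Aᴴ A
  obtain ⟨X, hXr, hX0, γ, β, hγ, hβ⟩ := exists_common_eigenvector hr hcomm
    (Module.End.mapsTo_genEigenspace_of_comm (commute_conicLyapunov p q (.refl _) hcomm.symm) r 1)
    (Module.End.mapsTo_genEigenspace_of_comm (commute_conicLyapunov p q hcomm (.refl _)) r 1)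
  obtain ⟨α, rfl⟩ : ∃ α, γ = conj α := ⟨conj γ, (Complex.conj_conj γ).symm⟩
  have hα : Xᴴ * A = α • Xᴴ := by simpa using congrArg conjTranspose hγ
  refine ⟨α, mem_spectrum_of_mul_eq_smul (conjTranspose_eq_zero.not.2 hX0) hα,
    β, mem_spectrum_of_mul_eq_smul hX0 hβ, smul_left_injective ℂ hX0 ?_⟩
  exact (Module.End.mem_eigenspace_iff.1 hXr).symm.trans
    (conicLyapunov_apply_of_mul_eq_smul p q hγ hβ)

theorem not_hasEigenvalue_conicLyapunov {p : ℝ} (hp : 0 ≤ p) {q : ℂ} {A : Matrix ι ι ℂ}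
    (hA : ∀ μ ∈ spectrum ℂ A, 0 < conicSymbol p q μ μ) {r : ℝ} (hr : r ≤ 0) :
    ¬ Module.End.HasEigenvalue ((conicLyapunov p q A).restrictScalars ℝ) r := by
  intro hev
  obtain ⟨X, hX⟩ := hev.exists_hasEigenvector
  have hXr : conicLyapunov p q A X = (r : ℂ) • X := hX.apply_eq_smul
  obtain ⟨α, hα, β, hβ, hrαβ⟩ := exists_conicSymbol_eq_of_hasEigenvalue
    (Module.End.hasEigenvalue_of_hasEigenvector ⟨Module.End.mem_eigenspace_iff.2 hXr, hX.2⟩)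
  have hαα := (Complex.pos_iff.1 (hA α hα)).1
  have hββ := (Complex.pos_iff.1 (hA β hβ)).1
  have havg := two_mul_re_conicSymbol p q α β
  rw [← hrαβ, Complex.ofReal_re] at havg
  have : 0 ≤ p * ‖α - β‖ ^ 2 := by positivity
  linarith

theorem isZTransformation_conicLyapunov {p : ℝ} (hp : 0 ≤ p) (q : ℂ) (A : Matrix ι ι ℂ) :
    IsZTransformation ((conicLyapunov p q A).restrictScalars ℝ) := by
  intro X hX v hv
  have hleft : star v ⬝ᵥ ((Aᴴ ^ 2 * X) *ᵥ v) = 0 := by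
    rw [← mulVec_mulVec, hv, mulVec_zero, dotProduct_zero]
  have hright : star v ⬝ᵥ ((X * A ^ 2) *ᵥ v) = 0 := by
    rw [← mulVec_mulVec, dotProduct_mulVec, ← hX.isHermitian, ← star_mulVec, hv, star_zero,
      zero_dotProduct]
  have hvalue : star v ⬝ᵥ (conicLyapunov p q A X *ᵥ v) =
      -((p : ℂ) * (star v ⬝ᵥ ((Aᴴ * X * A) *ᵥ v))) := by
    simp only [conicLyapunov_apply, sub_mulVec, add_mulVec, smul_mulVec, dotProduct_sub,
      dotProduct_add, dotProduct_smul, hv, hleft, hright, zero_sub, dotProduct_neg, smul_eq_mul,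
      mul_zero, add_zero, sub_zero]
  rw [LinearMap.restrictScalars_apply, hvalue, neg_nonpos]
  exact mul_nonneg (Complex.zero_le_real.2 hp)
    ((hX.conjTranspose_mul_mul_same A).dotProduct_mulVec_nonneg v)

theorem conicSymbol_self_pos_of_posDef {p : ℝ} {q : ℂ} {A H : Matrix ι ι ℂ} (hH : H.PosDef)
    (hLH : (conicLyapunov p q A H).PosDef) {μ : ℂ} (hμ : μ ∈ spectrum ℂ A) :
    0 < conicSymbol p q μ μ := by
  rw [← spectrum_toLin', ← Module.End.hasEigenvalue_iff_mem_spectrum] at hμ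
  obtain ⟨v, hv⟩ := hμ.exists_hasEigenvector
  have hAv : A *ᵥ v = μ • v := hv.apply_eq_smul
  have hpos := hLH.dotProduct_mulVec_pos hv.2
  rw [dotProduct_conicLyapunov_mulVec p q hAv hAv] at hpos
  exact (pos_iff_pos_of_mul_pos hpos).2 (hH.dotProduct_mulVec_pos hv.2)

theorem spectrum_in_ellipse_iff_lyapunov_general {p : ℝ} (hp : 0 ≤ p) (q : ℂ)
    {C : Matrix ι ι ℂ} (hC : C.PosDef) (A : Matrix ι ι ℂ) :
    (∀ μ ∈ spectrum ℂ A, p * ‖μ‖ ^ 2 + 2 * (q * μ ^ 2).re < 1) ↔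
      ∃ H : Matrix ι ι ℂ, H.PosDef ∧
        H - (p : ℂ) • (Aᴴ * H * A) - (q • (H * A ^ 2) + conj q • (Aᴴ ^ 2 * H)) = C := by
  simp only [← conicSymbol_self_pos_iff, ← conicLyapunov_apply]
  constructor
  · intro hA
    exact (isZTransformation_conicLyapunov hp q A).exists_posDef_apply_eq
      (conicLyapunov_conjTranspose p q A) (fun _ => not_hasEigenvalue_conicLyapunov hp hA) hC
  · rintro ⟨H, hH, rfl⟩ μ hμ
    exact conicSymbol_self_pos_of_posDef hH hC hμ

end ConicLyapunov

theorem ellipse_eq_conic (a b : ℝ) (μ : ℂ) :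
    μ.re ^ 2 / a ^ 2 + μ.im ^ 2 / b ^ 2 =
      (1 / (2 * a ^ 2) + 1 / (2 * b ^ 2)) * ‖μ‖ ^ 2 +
        2 * (((1 / (4 * a ^ 2) - 1 / (4 * b ^ 2) : ℝ) : ℂ) * μ ^ 2).re := by
  rw [Complex.re_ofReal_mul, ← Complex.normSq_eq_norm_sq, Complex.normSq_apply, pow_two μ,
    Complex.mul_re]
  ring

/-- The spectrum of `A` lies in the open elliptic region
`E_i = {λ : (Re λ)²/a² + (Im λ)²/b² < 1}` iff the elliptic Lyapunov-type equation
has a Hermitian positive definite solution. -/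
theorem spectrum_in_ellipse_iff_lyapunov {n : ℕ} (a b : ℝ) (hba : b < a) (hb : 0 < b)
    (C : Matrix (Fin n) (Fin n) ℂ) (hC : C.PosDef) (A : Matrix (Fin n) (Fin n) ℂ) :
    (∀ μ ∈ spectrum ℂ A, μ.re ^ 2 / a ^ 2 + μ.im ^ 2 / b ^ 2 < 1) ↔
      ∃ H : Matrix (Fin n) (Fin n) ℂ, H.PosDef ∧
        H - ((1 / (2 * a ^ 2) + 1 / (2 * b ^ 2) : ℝ) : ℂ) • (Aᴴ * H * A)
          - ((1 / (4 * a ^ 2) - 1 / (4 * b ^ 2) : ℝ) : ℂ) • (H * A ^ 2 + Aᴴ ^ 2 * H) = C := by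
  simpa only [ellipse_eq_conic, Complex.conj_ofReal, smul_add] using
    spectrum_in_ellipse_iff_lyapunov_general (p := 1 / (2 * a ^ 2) + 1 / (2 * b ^ 2))
      (by positivity) ((1 / (4 * a ^ 2) - 1 / (4 * b ^ 2) : ℝ) : ℂ) hC A
end

section
/- Let p > 0 and let C be a Hermitian positive definite complex n×n matrix. The spectrum of a complex n×n matrix A belongs to the open parabolic region P_i = {λ ∈ ℂ : (Im λ)² < 2p·Re λ} if and only if there exists a Hermitian positive definite complex n×n matrix H satisfying HA + A*H − (1/(2p))·A*HA + (1/(4p))·(HA² + (A*)²H) = C. -/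
open Matrix
open scoped ComplexOrder

/-!
Let `f(x, y) = x + y + (x - y)² / (4p)`. The left-hand side of the equation is `f(P, Q) H`, where
`P` is left multiplication by `A*` and `Q` is right multiplication by `A`.

If `Av = μv`, then evaluating the equation at `v` gives `f(conj μ, μ) · v*Hv = v*Cv`, and
`f(conj μ, μ) = 2 Re μ - (Im μ)² / p`, so a positive definite solution forces `μ` into the parabola.

Conversely, `f(conj x, y) ≠ 0` for `x`, `y` inside the parabola, so `f(P, Q)` is invertible as soon
as the spectrum of `A` lies there. By convexity this persists along the segment from `p · 1` to `A`,
and the solutions `H_t` form a continuous path of Hermitian matrices starting at `C / (2p)`. A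
positive semidefinite `H_t` cannot be singular: if `H_t v = 0`, the equation for `A_t` leaves
`v*Cv = -(A_t v)* H_t (A_t v) / (2p) ≤ 0`. So positive definiteness survives up to `H_1`.
-/

open LinearMap Module unitInterval

section Spectrum

variable {𝕜 R : Type*} [Field 𝕜] [Ring R] [Algebra 𝕜 R]

lemma mem_spectrum_of_hasEigenvector_mulLeft {a b : R} {r : 𝕜}
    (h : End.HasEigenvector (mulLeft 𝕜 a) r b) : r ∈ spectrum 𝕜 a := fun hr ↦
  h.2 <| hr.mul_right_eq_zero.1 <| by
    simpa [sub_mul, Algebra.algebraMap_eq_smul_one, sub_eq_zero] using h.apply_eq_smul.symm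

lemma mem_spectrum_of_hasEigenvector_mulRight {a b : R} {r : 𝕜}
    (h : End.HasEigenvector (mulRight 𝕜 a) r b) : r ∈ spectrum 𝕜 a := fun hr ↦
  h.2 <| hr.mul_left_eq_zero.1 <| by
    simpa [mul_sub, Algebra.algebraMap_eq_smul_one, sub_eq_zero] using h.apply_eq_smul.symm

lemma spectrum_lineMap_algebraMap [Nontrivial R] {a : R} (ha : (spectrum 𝕜 a).Nonempty) (c t : 𝕜) :
    spectrum 𝕜 (AffineMap.lineMap (algebraMap 𝕜 R c) a t) =
      (AffineMap.lineMap c · t) '' spectrum 𝕜 a := by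
  have heq : AffineMap.lineMap (algebraMap 𝕜 R c) a t = algebraMap 𝕜 R ((1 - t) • c) + t • a := by
    rw [AffineMap.lineMap_apply_module, ← Algebra.linearMap_apply, ← map_smul,
      Algebra.linearMap_apply]
  rw [heq, ← spectrum.singleton_add_eq, spectrum.smul_eq_smul _ _ ha, Set.singleton_add,
    ← Set.image_smul, Set.image_image]
  simp only [AffineMap.lineMap_apply_module]

lemma spectrum_lineMap_algebraMap_subset [Algebra ℂ R] [FiniteDimensional ℂ R] {S : Set ℂ} {c : ℂ}
    (hS : StarConvex ℝ c S) {a : R} (ha : spectrum ℂ a ⊆ S) (t : I) :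
    spectrum ℂ (AffineMap.lineMap (algebraMap ℂ R c) a (t : ℂ)) ⊆ S := by
  cases subsingleton_or_nontrivial R
  · simp [spectrum.of_subsingleton]
  rw [spectrum_lineMap_algebraMap
    (spectrum.nonempty_of_isAlgClosed_of_finiteDimensional ℂ a), Set.image_subset_iff]
  intro z hz
  have := hS (ha hz) (unitInterval.one_minus_nonneg t) t.2.1 (sub_add_cancel _ _)
  simpa [AffineMap.lineMap_apply_module] using this

end Spectrum

section CommonEigenvector

variable {K V : Type*} [Field K] [IsAlgClosed K] [AddCommGroup V] [Module K V]
  [FiniteDimensional K V]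

lemma exists_mem_hasEigenvector {f : End K V} {W : Submodule K V} (hW : W ≠ ⊥)
    (hf : Set.MapsTo f W W) : ∃ μ, ∃ v ∈ W, f.HasEigenvector μ v := by
  have := Submodule.nontrivial_iff_ne_bot.2 hW
  obtain ⟨μ, hμ⟩ := End.exists_eigenvalue (f.restrict hf)
  obtain ⟨v, hv⟩ := hμ.exists_hasEigenvector
  exact ⟨μ, v, v.2, End.hasEigenvector_iff.2
    ⟨End.mem_eigenspace_iff.2 (congrArg Subtype.val hv.apply_eq_smul), by simpa using hv.2⟩⟩

lemma exists_mem_hasEigenvector_of_commute {f g : End K V} (hfg : Commute f g)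
    {W : Submodule K V} (hW : W ≠ ⊥) (hf : Set.MapsTo f W W) (hg : Set.MapsTo g W W) :
    ∃ μ ν, ∃ v ∈ W, f.HasEigenvector μ v ∧ g.HasEigenvector ν v := by
  obtain ⟨μ, v, hvW, hv⟩ := exists_mem_hasEigenvector hW hf
  have hne : W ⊓ f.eigenspace μ ≠ ⊥ := (Submodule.ne_bot_iff _).2 ⟨v, ⟨hvW, hv.1⟩, hv.2⟩
  obtain ⟨ν, w, ⟨hwW, hwf⟩, hw⟩ := exists_mem_hasEigenvector (f := g) hne fun w hw ↦
    ⟨hg hw.1, End.mapsTo_genEigenspace_of_comm hfg μ 1 hw.2⟩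
  exact ⟨μ, ν, w, hwW, End.hasEigenvector_iff.2 ⟨hwf, hw.2⟩, hw⟩

end CommonEigenvector

section ContinuousSolution

variable {𝕜 E X : Type*} [NontriviallyNormedField 𝕜] [CompleteSpace 𝕜]
  [AddCommGroup E] [Module 𝕜 E] [FiniteDimensional 𝕜 E] [TopologicalSpace E]
  [IsTopologicalAddGroup E] [ContinuousSMul 𝕜 E] [T2Space E] [TopologicalSpace X]

-- By Cramer's rule the solution is a rational function of the matrix of `L x`.
lemma exists_continuous_forall_apply_eq {L : X → End 𝕜 E} (hL : ∀ v, Continuous (L · v))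
    (hinj : ∀ x, Function.Injective (L x)) (c : E) :
    ∃ h : X → E, Continuous h ∧ ∀ x, L x (h x) = c := by
  let b := finBasis 𝕜 E
  let M x := toMatrix b b (L x)
  have hM : Continuous M := continuous_matrix fun i j ↦ by
    simp only [M, toMatrix_apply]
    exact (b.coord i).continuous_of_finiteDimensional.comp (hL (b j))
  have hdet x : (M x).det ≠ 0 := by
    rw [LinearMap.det_toMatrix]
    exact (LinearMap.isUnit_iff_isUnit_det _).1
      ((LinearMap.isUnit_iff_ker_eq_bot _).2 (ker_eq_bot.2 (hinj x))) |>.ne_zero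
  have hMinv : Continuous fun x ↦ (M x)⁻¹ := by
    simp only [Matrix.inv_def, Ring.inverse_eq_inv']
    exact (hM.matrix_det.inv₀ hdet).smul hM.matrix_adjugate
  refine ⟨fun x ↦ b.equivFun.symm ((M x)⁻¹ *ᵥ b.equivFun c), ?_, fun x ↦ b.equivFun.injective ?_⟩
  · exact b.equivFun.symm.toLinearMap.continuous_of_finiteDimensional.comp
      (hMinv.matrix_mulVec continuous_const)
  · rw [b.equivFun_apply, ← toMatrix_mulVec_repr b b, ← b.equivFun_apply,
      LinearEquiv.apply_symm_apply, mulVec_mulVec,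
      Matrix.mul_nonsing_inv _ (isUnit_iff_ne_zero.2 (hdet x)), one_mulVec]

end ContinuousSolution

section PosDefPath

variable {𝕜 n X : Type*} [RCLike 𝕜]

lemma posDef_iff_isHermitian_and_re_pos [Fintype n] {M : Matrix n n 𝕜} :
    M.PosDef ↔ M.IsHermitian ∧ ∀ v, v ≠ 0 → 0 < RCLike.re (star v ⬝ᵥ M *ᵥ v) := by
  rw [posDef_iff_dotProduct_mulVec]
  refine and_congr_right fun hM ↦ forall₂_congr fun v _ ↦ ?_
  rw [RCLike.pos_iff, and_iff_left (hM.im_star_dotProduct_mulVec_self v)]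

lemma forall_re_star_dotProduct_mulVec_pos_iff_sphere [Fintype n] {M : Matrix n n 𝕜} :
    (∀ v, v ≠ 0 → 0 < RCLike.re (star v ⬝ᵥ M *ᵥ v)) ↔
      ∀ v ∈ Metric.sphere (0 : n → 𝕜) 1, 0 < RCLike.re (star v ⬝ᵥ M *ᵥ v) := by
  refine ⟨fun h v hv ↦ h v (ne_zero_of_mem_unit_sphere ⟨v, hv⟩), fun h v hv ↦ ?_⟩
  have hpos := h (((‖v‖⁻¹ : ℝ) : 𝕜) • v) (by simp [norm_smul, hv])
  have hscale : RCLike.re (star (((‖v‖⁻¹ : ℝ) : 𝕜) • v) ⬝ᵥ M *ᵥ (((‖v‖⁻¹ : ℝ) : 𝕜) • v)) =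
      ‖v‖⁻¹ ^ 2 * RCLike.re (star v ⬝ᵥ M *ᵥ v) := by
    simp only [star_smul, mulVec_smul, smul_dotProduct, dotProduct_smul, smul_eq_mul,
      RCLike.star_def, RCLike.conj_ofReal, RCLike.re_ofReal_mul]
    ring
  exact pos_of_mul_pos_right (hscale ▸ hpos) (by positivity)

lemma isOpen_setOf_forall_re_star_dotProduct_mulVec_pos [Fintype n] :
    IsOpen {M : Matrix n n 𝕜 | ∀ v, v ≠ 0 → 0 < RCLike.re (star v ⬝ᵥ M *ᵥ v)} := by
  simp only [forall_re_star_dotProduct_mulVec_pos_iff_sphere]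
  refine isOpen_iff_mem_nhds.2 fun M hM ↦
    (isCompact_sphere 0 1).eventually_forall_of_forall_eventually fun v hv ↦ ?_
  have hcont : Continuous fun x : Matrix n n 𝕜 × (n → 𝕜) ↦
      RCLike.re (star x.2 ⬝ᵥ x.1 *ᵥ x.2) := by fun_prop
  exact hcont.continuousAt.eventually_const_lt (hM v hv)

lemma isClosed_setOf_posSemidef : IsClosed {M : Matrix n n 𝕜 | M.PosSemidef} := by
  simp only [PosSemidef, Matrix.IsHermitian, Set.ofPred_and, Set.ofPred_forall]
  refine (isClosed_eq (by fun_prop) continuous_id).inter (isClosed_iInter fun v ↦ ?_)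
  refine isClosed_Ici.preimage (f := fun M : Matrix n n 𝕜 ↦
    v.sum fun i vi ↦ v.sum fun j vj ↦ star vi * M i j * vj) ?_
  unfold Finsupp.sum
  fun_prop

lemma forall_posDef_of_preconnectedSpace [Finite n] [TopologicalSpace X] [PreconnectedSpace X]
    {H : X → Matrix n n 𝕜} (hH : Continuous H) (hherm : ∀ x, (H x).IsHermitian)
    (hpos : ∀ x, (H x).PosSemidef → (H x).PosDef) {x₀ : X} (hx₀ : (H x₀).PosDef) (x : X) :
    (H x).PosDef := by
  have := Fintype.ofFinite n
  have hclosed : {x | (H x).PosDef} = H ⁻¹' {M | M.PosSemidef} :=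
    Set.ext fun x ↦ ⟨PosDef.posSemidef, hpos x⟩
  have hopen : {x | (H x).PosDef} =
      H ⁻¹' {M | ∀ v, v ≠ 0 → 0 < RCLike.re (star v ⬝ᵥ M *ᵥ v)} :=
    Set.ext fun x ↦ posDef_iff_isHermitian_and_re_pos.trans (and_iff_right (hherm x))
  have hclopen : IsClopen {x | (H x).PosDef} :=
    ⟨hclosed ▸ isClosed_setOf_posSemidef.preimage hH,
      hopen ▸ isOpen_setOf_forall_re_star_dotProduct_mulVec_pos.preimage hH⟩
  exact Set.eq_univ_iff_forall.1 (hclopen.eq_univ ⟨x₀, hx₀⟩) x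

end PosDefPath

/-- The open region `P_i` inside the parabola `(Im z)² = 2p · Re z`. -/
def parabolaInterior (p : ℝ) : Set ℂ := {z | z.im ^ 2 < 2 * p * z.re}

/-- The symbol of the Lyapunov operator of the parabola, which represents the curve in conjugate
coordinates: on `x = conj y` it equals `2 Re y - (Im y)² / p`. -/
noncomputable def parabolicSymbol (p : ℝ) (x y : ℂ) : ℂ := x + y + (x - y) ^ 2 / (4 * p)

/-- The Lyapunov operator `H ↦ Ha + a*H - (1/2p) a*Ha + (1/4p) (Ha² + (a*)²H)` of the parabola, in
any complex star algebra. It is defined by substituting left multiplication by `a*` and right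
multiplication by `a` into `parabolicSymbol p`; see `parabolicLyapunov_apply`. -/
noncomputable def parabolicLyapunov {R : Type*} [Ring R] [Algebra ℂ R] [Star R] (p : ℝ) (a : R) :
    End ℂ R :=
  mulLeft ℂ (star a) + mulRight ℂ a
    + (1 / (4 * p) : ℂ) • (mulLeft ℂ (star a) - mulRight ℂ a) ^ 2

section Symbol

variable {p : ℝ}

lemma convex_parabolaInterior (hp : 0 < p) : Convex ℝ (parabolaInterior p) := by
  have hcvx : ConvexOn ℝ Set.univ fun s : ℝ ↦ (2 * p)⁻¹ • s ^ 2 :=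
    even_two.convexOn_pow.smul (by positivity)
  have heq : parabolaInterior p =
      (Complex.imLm.prod Complex.reLm) ⁻¹' {q | q.1 ∈ Set.univ ∧ (2 * p)⁻¹ • q.1 ^ 2 < q.2} := by
    ext z
    simp only [parabolaInterior, Set.mem_preimage, Set.mem_ofPred_eq, Set.mem_univ, true_and,
      smul_eq_mul, inv_mul_lt_iff₀ (show 0 < 2 * p by positivity)]
    rfl
  exact heq ▸ hcvx.convex_strict_epigraph.linear_preimage _

lemma ofReal_mem_parabolaInterior (hp : 0 < p) {r : ℝ} (hr : 0 < r) :
    (r : ℂ) ∈ parabolaInterior p := by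
  simp [parabolaInterior, hp, hr]

lemma parabolicSymbol_conj_self (p : ℝ) (z : ℂ) :
    parabolicSymbol p (star z) z = (2 * z.re - z.im ^ 2 / p : ℝ) := by
  have hadd : star z + z = (2 * z.re : ℝ) := by rw [add_comm]; exact Complex.add_conj z
  have hsub : star z - z = -((2 * z.im : ℝ) * Complex.I) := by
    rw [← neg_sub]; exact congrArg _ (Complex.sub_conj z)
  rw [parabolicSymbol, hadd, hsub, neg_sq, mul_pow, Complex.I_sq]
  push_cast
  ring

lemma mem_parabolaInterior_iff (hp : 0 < p) {z : ℂ} :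
    z ∈ parabolaInterior p ↔ 0 < 2 * z.re - z.im ^ 2 / p := by
  rw [sub_pos, div_lt_iff₀ hp, parabolaInterior, Set.mem_ofPred_eq, mul_right_comm]

lemma parabolicSymbol_ne_zero (hp : 0 < p) {x y : ℂ} (hx : star x ∈ parabolaInterior p)
    (hy : y ∈ parabolaInterior p) : parabolicSymbol p x y ≠ 0 := by
  intro h
  have hx' : x.im ^ 2 < 2 * p * x.re := by simpa [parabolaInterior] using hx
  have hy' : y.im ^ 2 < 2 * p * y.re := hy
  have hp' : (p : ℂ) ≠ 0 := Complex.ofReal_ne_zero.2 hp.ne'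
  have hzero : 4 * p * (x + y) + (x - y) ^ 2 = 0 := by
    rw [parabolicSymbol] at h
    field_simp at h
    linear_combination h
  have hre : 4 * p * (x.re + y.re) + ((x.re - y.re) ^ 2 - (x.im - y.im) ^ 2) = 0 := by
    simpa [sq] using congrArg Complex.re hzero
  -- `(Im x - Im y)² ≤ 2 (Im x)² + 2 (Im y)² < 4p (Re x + Re y)` makes the real part positive.
  nlinarith [sq_nonneg (x.re - y.re), sq_nonneg (x.im + y.im)]

end Symbol

section StarAlgebra

variable {R : Type*} [Ring R] [StarRing R] [Algebra ℂ R] {p : ℝ} {a : R}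

lemma parabolicLyapunov_apply (p : ℝ) (a h : R) :
    parabolicLyapunov p a h =
      h * a + star a * h - ((1 / (2 * p) : ℝ) : ℂ) • (star a * h * a)
        + ((1 / (4 * p) : ℝ) : ℂ) • (h * a ^ 2 + star a ^ 2 * h) := by
  simp only [parabolicLyapunov, LinearMap.add_apply, LinearMap.sub_apply, LinearMap.smul_apply,
    mulLeft_apply, mulRight_apply, pow_two, End.mul_apply, mul_sub, sub_mul, mul_assoc]
  push_cast
  match_scalars <;> ring

lemma parabolicLyapunov_star [StarModule ℂ R] (p : ℝ) (a h : R) :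
    parabolicLyapunov p a (star h) = star (parabolicLyapunov p a h) := by
  simp only [parabolicLyapunov_apply, star_add, star_sub, star_smul, star_mul, star_pow, star_star,
    Complex.star_def, Complex.conj_ofReal, mul_assoc, add_comm]

lemma parabolicLyapunov_algebraMap_ofReal [StarModule ℂ R] (p r : ℝ) (h : R) :
    parabolicLyapunov p (algebraMap ℂ R r) h = ((2 * r : ℝ) : ℂ) • h := by
  have hstar : star (algebraMap ℂ R r) = algebraMap ℂ R r := by
    rw [← algebraMap_star_comm, Complex.star_def, Complex.conj_ofReal]
  rw [parabolicLyapunov, hstar, Algebra.algebraMap_eq_smul_one]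
  simp only [LinearMap.add_apply, LinearMap.sub_apply, LinearMap.smul_apply, pow_two,
    End.mul_apply, mulLeft_apply, mulRight_apply, smul_mul_assoc, mul_smul_comm, one_mul, mul_one,
    sub_self, smul_zero]
  push_cast
  module

lemma parabolicLyapunov_apply_of_hasEigenvector {x y : ℂ} {h : R}
    (hx : End.HasEigenvector (mulLeft ℂ (star a)) x h)
    (hy : End.HasEigenvector (mulRight ℂ a) y h) :
    parabolicLyapunov p a h = parabolicSymbol p x y • h := by
  simp only [parabolicLyapunov, parabolicSymbol, LinearMap.add_apply, LinearMap.sub_apply,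
    LinearMap.smul_apply, pow_two, End.mul_apply, hx.apply_eq_smul, hy.apply_eq_smul, map_sub,
    map_smul]
  module

lemma parabolicLyapunov_injective [StarModule ℂ R] [FiniteDimensional ℂ R] (hp : 0 < p)
    (ha : spectrum ℂ a ⊆ parabolaInterior p) : Function.Injective (parabolicLyapunov p a) := by
  rw [← ker_eq_bot, ← End.eigenspace_zero]
  by_contra hker
  have hcomm := commute_mulLeft_right (R := ℂ) (star a) a
  have hleft : Commute (parabolicLyapunov p a) (mulLeft ℂ (star a)) :=
    ((Commute.refl _).add_left hcomm.symm).add_left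
      ((((Commute.refl _).sub_left hcomm.symm).pow_left 2).smul_left _)
  have hright : Commute (parabolicLyapunov p a) (mulRight ℂ a) :=
    (hcomm.add_left (Commute.refl _)).add_left
      (((hcomm.sub_left (Commute.refl _)).pow_left 2).smul_left _)
  obtain ⟨x, y, h, hh, hx, hy⟩ := exists_mem_hasEigenvector_of_commute hcomm hker
    (End.mapsTo_genEigenspace_of_comm hleft 0 1) (End.mapsTo_genEigenspace_of_comm hright 0 1)
  have hxa : star x ∈ spectrum ℂ a := by
    simpa [spectrum.map_star] using mem_spectrum_of_hasEigenvector_mulLeft hx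
  have hya : y ∈ spectrum ℂ a := mem_spectrum_of_hasEigenvector_mulRight hy
  rw [End.mem_eigenspace_iff, zero_smul, parabolicLyapunov_apply_of_hasEigenvector hx hy] at hh
  exact (smul_ne_zero (parabolicSymbol_ne_zero hp (ha hxa) (ha hya)) hx.2) hh

end StarAlgebra

section Matrix

variable {n : Type*} [Fintype n] [DecidableEq n] {p : ℝ} {A H C : Matrix n n ℂ}

lemma star_dotProduct_parabolicLyapunov_mulVec (p : ℝ) (A H : Matrix n n ℂ) (v : n → ℂ) :
    star v ⬝ᵥ parabolicLyapunov p A H *ᵥ v =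
      star v ⬝ᵥ H *ᵥ (A *ᵥ v) + star (A *ᵥ v) ⬝ᵥ H *ᵥ v
        - ((1 / (2 * p) : ℝ) : ℂ) * (star (A *ᵥ v) ⬝ᵥ H *ᵥ (A *ᵥ v))
        + ((1 / (4 * p) : ℝ) : ℂ) *
          (star v ⬝ᵥ H *ᵥ (A *ᵥ (A *ᵥ v)) + star (A *ᵥ (A *ᵥ v)) ⬝ᵥ H *ᵥ v) := by
  simp only [parabolicLyapunov_apply, star_eq_conjTranspose, pow_two, star_mulVec, add_mulVec,
    sub_mulVec, smul_mulVec, ← mulVec_mulVec, dotProduct_add, dotProduct_sub, dotProduct_smul,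
    smul_eq_mul, ← dotProduct_mulVec]

lemma posDef_of_posSemidef_of_posDef_parabolicLyapunov (hp : 0 < p) (hH : H.PosSemidef)
    (hL : (parabolicLyapunov p A H).PosDef) : H.PosDef := by
  refine PosDef.of_dotProduct_mulVec_pos hH.1 fun v hv ↦
    (hH.dotProduct_mulVec_nonneg v).lt_of_ne' fun h0 ↦ ?_
  have hHv : H *ᵥ v = 0 := (hH.dotProduct_mulVec_zero_iff v).1 h0
  have hvH : ∀ w, star v ⬝ᵥ H *ᵥ w = 0 := fun w ↦ by
    rw [dotProduct_mulVec, ← hH.1.eq, ← star_mulVec, hHv, star_zero, zero_dotProduct]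
  have hform : star v ⬝ᵥ parabolicLyapunov p A H *ᵥ v =
      -(((1 / (2 * p) : ℝ) : ℂ) * (star (A *ᵥ v) ⬝ᵥ H *ᵥ (A *ᵥ v))) := by
    simp only [star_dotProduct_parabolicLyapunov_mulVec, hHv, hvH, dotProduct_zero, add_zero,
      mul_zero, zero_sub]
  have hnonneg : 0 ≤ ((1 / (2 * p) : ℝ) : ℂ) * (star (A *ᵥ v) ⬝ᵥ H *ᵥ (A *ᵥ v)) :=
    mul_nonneg (Complex.zero_le_real.2 (by positivity)) (hH.dotProduct_mulVec_nonneg _)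
  exact (hL.dotProduct_mulVec_pos hv).not_ge (hform ▸ neg_nonpos.2 hnonneg)

lemma star_dotProduct_parabolicLyapunov_mulVec_of_hasEigenvector {μ : ℂ} {v : n → ℂ}
    (hv : End.HasEigenvector (toLin' A) μ v) :
    star v ⬝ᵥ parabolicLyapunov p A H *ᵥ v =
      parabolicSymbol p (star μ) μ * (star v ⬝ᵥ H *ᵥ v) := by
  have hAv : A *ᵥ v = μ • v := by simpa using hv.apply_eq_smul
  simp only [star_dotProduct_parabolicLyapunov_mulVec, parabolicSymbol, hAv, mulVec_smul, star_smul,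
    smul_dotProduct, dotProduct_smul, smul_eq_mul]
  push_cast
  ring

lemma spectrum_subset_parabolaInterior_of_posDef (hp : 0 < p) (hH : H.PosDef)
    (hL : (parabolicLyapunov p A H).PosDef) : spectrum ℂ A ⊆ parabolaInterior p := by
  intro μ hμ
  rw [← spectrum_toLin', ← End.hasEigenvalue_iff_mem_spectrum] at hμ
  obtain ⟨v, hv⟩ := hμ.exists_hasEigenvector
  have hLv := hL.dotProduct_mulVec_pos hv.2
  rw [star_dotProduct_parabolicLyapunov_mulVec_of_hasEigenvector hv,
    parabolicSymbol_conj_self, Complex.pos_iff, Complex.re_ofReal_mul] at hLv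
  have hHv := (Complex.pos_iff.1 (hH.dotProduct_mulVec_pos hv.2)).1
  exact (mem_parabolaInterior_iff hp).2 (pos_of_mul_pos_left hLv.1 hHv.le)

lemma exists_posDef_parabolicLyapunov_eq (hp : 0 < p) (hA : spectrum ℂ A ⊆ parabolaInterior p)
    (hC : C.PosDef) : ∃ H : Matrix n n ℂ, H.PosDef ∧ parabolicLyapunov p A H = C := by
  let B (t : I) : Matrix n n ℂ := AffineMap.lineMap (algebraMap ℂ (Matrix n n ℂ) (p : ℂ)) A (t : ℂ)
  have hB : Continuous B := AffineMap.lineMap_continuous.comp (by fun_prop)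
  have hinj t : Function.Injective (parabolicLyapunov p (B t)) :=
    parabolicLyapunov_injective hp <| spectrum_lineMap_algebraMap_subset
      ((convex_parabolaInterior hp).starConvex (ofReal_mem_parabolaInterior hp hp)) hA t
  obtain ⟨H, hHcont, hHC⟩ := exists_continuous_forall_apply_eq
    (L := fun t ↦ parabolicLyapunov p (B t))
    (fun M ↦ by simp only [parabolicLyapunov_apply]; fun_prop) hinj C
  have hherm t : (H t).IsHermitian := hinj t <| by
    rw [← star_eq_conjTranspose, parabolicLyapunov_star, hHC, star_eq_conjTranspose, hC.1.eq]
  have hpos t (ht : (H t).PosSemidef) : (H t).PosDef :=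
    posDef_of_posSemidef_of_posDef_parabolicLyapunov hp ht ((hHC t).symm ▸ hC)
  have hscalar : ((2 * p : ℝ) : ℂ) • H 0 = C := by
    rw [← parabolicLyapunov_algebraMap_ofReal p p, ← hHC 0]
    simp [B]
  have hzero : (H 0).PosDef := by
    rw [← eq_inv_smul_iff₀ (by simp [hp.ne'])] at hscalar
    rw [hscalar]
    exact hC.smul (by simp [hp])
  refine ⟨H 1, forall_posDef_of_preconnectedSpace hHcont hherm hpos hzero 1, ?_⟩
  simpa [B] using hHC 1

theorem spectrum_in_parabola_iff_lyapunov_general (hp : 0 < p) (hC : C.PosDef) :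
    (∀ μ ∈ spectrum ℂ A, μ.im ^ 2 < 2 * p * μ.re) ↔
      ∃ H : Matrix n n ℂ, H.PosDef ∧
        H * A + Aᴴ * H - ((1 / (2 * p) : ℝ) : ℂ) • (Aᴴ * H * A)
          + ((1 / (4 * p) : ℝ) : ℂ) • (H * A ^ 2 + Aᴴ ^ 2 * H) = C := by
  simp only [← star_eq_conjTranspose, ← parabolicLyapunov_apply]
  refine ⟨fun hA ↦ exists_posDef_parabolicLyapunov_eq hp hA hC, ?_⟩
  rintro ⟨H, hH, rfl⟩
  exact spectrum_subset_parabolaInterior_of_posDef hp hH hC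

end Matrix

/-- The spectrum of `A` lies in the open parabolic region
`P_i = {λ : (Im λ)² < 2p·Re λ}` iff the parabolic Lyapunov-type equation
has a Hermitian positive definite solution. -/
theorem spectrum_in_parabola_iff_lyapunov {n : ℕ} (p : ℝ) (hp : 0 < p)
    (C : Matrix (Fin n) (Fin n) ℂ) (hC : C.PosDef) (A : Matrix (Fin n) (Fin n) ℂ) :
    (∀ μ ∈ spectrum ℂ A, μ.im ^ 2 < 2 * p * μ.re) ↔
      ∃ H : Matrix (Fin n) (Fin n) ℂ, H.PosDef ∧
        H * A + Aᴴ * H - ((1 / (2 * p) : ℝ) : ℂ) • (Aᴴ * H * A)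
          + ((1 / (4 * p) : ℝ) : ℂ) • (H * A ^ 2 + Aᴴ ^ 2 * H) = C :=
  spectrum_in_parabola_iff_lyapunov_general hp hC
end
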